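/- arXiv:1312.1075 — 5 statements merged into one kernel-verified Lean document; each statement's English description precedes it below -/
import Mathlib

section
/- Suppose Θ = {θ_1, θ_2}, Assumption 1 holds, ∂_1 ℓ̃_e^{θ_2}(x, y) = ∂_2 ℓ̃_e^{θ_1}(x, y) for every edge e ∈ E and all (x, y) ∈ ℝ², and the function V(f) = Σ_{e∈E} [ ∫_0^{φ_e^{θ_1}(f)} ℓ̃_e^{θ_1}(u_1, φ_e^{θ_2}(f)) du_1 + ∫_0^{φ_e^{θ_2}(f)} ℓ̃_e^{θ_2}(φ_e^{θ_1}(f), u_2) du_2 − ∫_0^{φ_e^{θ_2}(f)} ∫_0^{φ_e^{θ_1}(f)} ∂_2 ℓ̃_e^{θ_1}(u_1, u_2) du_1 du_2 ] is convex on the (convex) set of feasible flows. Then a feasible flow f is a Nash equilibrium of the heterogeneous routing game if and only if f minimizes V over the set of feasible flows. -/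
/-!
On each edge the summand of `Vpot` is a function `W(x, y)` of the two edge flows with gradient
`(ℓ1(x, y), ℓ2(x, y))`: evaluating the inner integral of the double integral through the symmetry
condition turns `W` into `∫ ℓ1(u, y) du` plus a function of `y` alone, and exchanging the order
of integration turns it into `∫ ℓ2(x, u) du` plus a function of `x` alone; each form
is differentiated by the fundamental theorem of calculus (`hasDerivAt_edgePot_fst`,
`hasDerivAt_edgePot_snd`). The partial derivatives are continuous, so `W` is differentiable,
and by the chain rule the derivative of `Vpot` at `(g, h)` in
the direction `(u, v)` is `∑ p, c₁ p * u p + ∑ p, c₂ p * v p`, with `cᵢ` the path costs at `(g, h)`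
(`hasDerivAt_Vpot`).

Both properties of the theorem are therefore equivalent to the variational inequality saying that
this derivative is nonnegative towards every feasible flow: for minimality this is the first-order
condition for a convex function, and for the Nash property it is `equilibrium_iff_variational`,
applied to each type separately.
-/

open MeasureTheory

noncomputable section

namespace RoutingGame

open scoped Classical

variable {E P : Type*}

/-- Edge flow of one type on edge `e` induced by the path flows `g` of that type:
`φ_e = ∑_{p ∈ P : e ∈ p} g_p`. -/
def edgeFlow [Fintype P] (edges : P → Finset E) (g : P → ℝ) (e : E) : ℝ :=
  ∑ p ∈ Finset.univ.filter (fun p => e ∈ edges p), g p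

/-- Utility of player 1 (type `θ₁`) in the abstract game:
`U₁(g,h) = ∑_e ∫_0^{φ_e^{θ₁}} ℓ̃_e^{θ₁}(u, φ_e^{θ₂}) du`. -/
def U1 [Fintype E] [Fintype P] (edges : P → Finset E) (ℓ1 : E → ℝ → ℝ → ℝ)
    (g h : P → ℝ) : ℝ :=
  ∑ e : E, ∫ u in (0:ℝ)..(edgeFlow edges g e), ℓ1 e u (edgeFlow edges h e)

/-- Utility of player 2 (type `θ₂`) in the abstract game:
`U₂(g,h) = ∑_e ∫_0^{φ_e^{θ₂}} ℓ̃_e^{θ₂}(φ_e^{θ₁}, u) du`. -/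
def U2 [Fintype E] [Fintype P] (edges : P → Finset E) (ℓ2 : E → ℝ → ℝ → ℝ)
    (g h : P → ℝ) : ℝ :=
  ∑ e : E, ∫ u in (0:ℝ)..(edgeFlow edges h e), ℓ2 e (edgeFlow edges g e) u

/-- `V` is a potential function for the two-player abstract game associated with
edge cost functions `ℓ1, ℓ2` (arguments of `V`: path flows of type `θ₁`, of type `θ₂`). -/
def IsPotential [Fintype E] [Fintype P] (edges : P → Finset E)
    (ℓ1 ℓ2 : E → ℝ → ℝ → ℝ) (V : (P → ℝ) → (P → ℝ) → ℝ) : Prop :=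
  (∀ g g' h : P → ℝ, V g h - V g' h = U1 edges ℓ1 g h - U1 edges ℓ1 g' h) ∧
  (∀ g h h' : P → ℝ, V g h - V g h' = U2 edges ℓ2 g h - U2 edges ℓ2 g h')

/-- The candidate potential function
`V(f) = ∑_e [∫_0^{φ₁} ℓ₁(u,φ₂) du + ∫_0^{φ₂} ℓ₂(φ₁,u) du − ∫_0^{φ₂}∫_0^{φ₁} ∂₂ℓ₁(u₁,u₂) du₁ du₂]`. -/
def Vpot [Fintype E] [Fintype P] (edges : P → Finset E)
    (ℓ1 ℓ2 : E → ℝ → ℝ → ℝ) (g h : P → ℝ) : ℝ :=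
  ∑ e : E,
    ((∫ u in (0:ℝ)..(edgeFlow edges g e), ℓ1 e u (edgeFlow edges h e)) +
     (∫ u in (0:ℝ)..(edgeFlow edges h e), ℓ2 e (edgeFlow edges g e) u) -
     ∫ u2 in (0:ℝ)..(edgeFlow edges h e),
       ∫ u1 in (0:ℝ)..(edgeFlow edges g e), deriv (fun t => ℓ1 e u1 t) u2)

variable {K : ℕ}

/-- A pair of path-flow vectors (one per type) is feasible: nonnegative and meeting
the demand of each commodity for each type. -/
def Feasible [Fintype P] (com : P → Fin K) (F1 F2 : Fin K → ℝ) (g h : P → ℝ) : Prop :=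
  (∀ p, 0 ≤ g p) ∧ (∀ p, 0 ≤ h p) ∧
  (∀ k, ∑ p ∈ Finset.univ.filter (fun p => com p = k), g p = F1 k) ∧
  (∀ k, ∑ p ∈ Finset.univ.filter (fun p => com p = k), h p = F2 k)

/-- Cost of a path for a given type: sum of the edge costs along the path, evaluated
at the induced edge flows. -/
def pathCost [Fintype P] (edges : P → Finset E) (ℓ : E → ℝ → ℝ → ℝ)
    (g h : P → ℝ) (p : P) : ℝ :=
  ∑ e ∈ edges p, ℓ e (edgeFlow edges g e) (edgeFlow edges h e)

/-- Nash equilibrium of the two-type heterogeneous routing game: for each type, every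
path of a commodity carrying positive flow of that type has cost no larger than any
other path of the same commodity. -/
def IsNash [Fintype P] (edges : P → Finset E) (com : P → Fin K)
    (ℓ1 ℓ2 : E → ℝ → ℝ → ℝ) (g h : P → ℝ) : Prop :=
  (∀ p p' : P, com p = com p' → 0 < g p →
    pathCost edges ℓ1 g h p ≤ pathCost edges ℓ1 g h p') ∧
  (∀ p p' : P, com p = com p' → 0 < h p →
    pathCost edges ℓ2 g h p ≤ pathCost edges ℓ2 g h p')

/-! ### The potential of a single edge -/

/-- The contribution of a single edge to `Vpot`, as a function of the edge flows `x`, `y` of the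
two types. -/
def edgePot (a b : ℝ → ℝ → ℝ) (x y : ℝ) : ℝ :=
  (∫ u in (0:ℝ)..x, a u y) + (∫ u in (0:ℝ)..y, b x u) -
    ∫ u2 in (0:ℝ)..y, ∫ u1 in (0:ℝ)..x, deriv (fun t => a u1 t) u2

section Edge

variable {a b : ℝ → ℝ → ℝ}

lemma contDiff_fst (ha : ContDiff ℝ 1 (fun q : ℝ × ℝ => a q.1 q.2)) (y : ℝ) :
    ContDiff ℝ 1 (fun t => a t y) :=
  ha.comp (contDiff_id.prodMk contDiff_const)

lemma contDiff_snd (ha : ContDiff ℝ 1 (fun q : ℝ × ℝ => a q.1 q.2)) (x : ℝ) :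
    ContDiff ℝ 1 (fun t => a x t) :=
  ha.comp (contDiff_const.prodMk contDiff_id)

lemma continuous_deriv_snd (ha : ContDiff ℝ 1 (fun q : ℝ × ℝ => a q.1 q.2)) :
    Continuous (fun q : ℝ × ℝ => deriv (fun t => a q.1 t) q.2) := by
  have key : (fun q : ℝ × ℝ => deriv (fun t => a q.1 t) q.2)
      = fun q => fderiv ℝ (fun q : ℝ × ℝ => a q.1 q.2) q (0, 1) := by
    funext q
    have h1 := (ha.differentiable one_ne_zero q).hasFDerivAt
    have h2 : HasDerivAt (fun t : ℝ => (q.1, t)) ((0 : ℝ), (1 : ℝ)) q.2 :=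
      (hasDerivAt_const _ _).prodMk (hasDerivAt_id _)
    exact (h1.comp_hasDerivAt q.2 h2).deriv
  rw [key]
  exact (ha.continuous_fderiv one_ne_zero).clm_apply continuous_const

/-- By symmetry the mixed derivative is `∂₁ b`, so the inner integral is `b x · - b 0 ·`. -/
lemma edgePot_eq_fst (hb : ContDiff ℝ 1 (fun q : ℝ × ℝ => b q.1 q.2))
    (hsym : ∀ x y : ℝ, deriv (fun t => b t y) x = deriv (fun t => a x t) y) (x y : ℝ) :
    edgePot a b x y = (∫ u in (0:ℝ)..x, a u y) + ∫ u in (0:ℝ)..y, b 0 u := by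
  have inner : ∀ v, (∫ u in (0:ℝ)..x, deriv (fun t => a u t) v) = b x v - b 0 v := by
    intro v
    simp_rw [← hsym]
    have hd := contDiff_fst hb v
    exact intervalIntegral.integral_deriv_eq_sub
      (fun z _ => hd.differentiable one_ne_zero z)
      ((hd.continuous_deriv le_rfl).intervalIntegrable _ _)
  simp only [edgePot, inner]
  rw [intervalIntegral.integral_sub ((contDiff_snd hb x).continuous.intervalIntegrable _ _)
    ((contDiff_snd hb 0).continuous.intervalIntegrable _ _)]
  ring

/-- The same potential after exchanging the order of integration. -/
lemma edgePot_eq_snd (ha : ContDiff ℝ 1 (fun q : ℝ × ℝ => a q.1 q.2)) (x y : ℝ) :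
    edgePot a b x y = (∫ u in (0:ℝ)..x, a u 0) + ∫ u in (0:ℝ)..y, b x u := by
  have inner : ∀ u, (∫ v in (0:ℝ)..y, deriv (fun t => a u t) v) = a u y - a u 0 := by
    intro u
    have hd := contDiff_snd ha u
    exact intervalIntegral.integral_deriv_eq_sub
      (fun z _ => hd.differentiable one_ne_zero z)
      ((hd.continuous_deriv le_rfl).intervalIntegrable _ _)
  have swap : (∫ v in (0:ℝ)..y, ∫ u in (0:ℝ)..x, deriv (fun t => a u t) v)
      = ∫ u in (0:ℝ)..x, ∫ v in (0:ℝ)..y, deriv (fun t => a u t) v := by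
    refine intervalIntegral_intervalIntegral_swap ?_
    have hc : Continuous (Function.uncurry fun v u : ℝ => deriv (fun t => a u t) v) :=
      (continuous_deriv_snd ha).comp continuous_swap
    exact (hc.continuousOn.integrableOn_compact
      (isCompact_uIcc.prod isCompact_uIcc)).mono_set
      (Set.prod_mono Set.uIoc_subset_uIcc Set.uIoc_subset_uIcc)
  simp only [edgePot, swap, inner]
  rw [intervalIntegral.integral_sub ((contDiff_fst ha y).continuous.intervalIntegrable _ _)
    ((contDiff_fst ha 0).continuous.intervalIntegrable _ _)]
  ring

lemma hasDerivAt_edgePot_fst (ha : ContDiff ℝ 1 (fun q : ℝ × ℝ => a q.1 q.2))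
    (hb : ContDiff ℝ 1 (fun q : ℝ × ℝ => b q.1 q.2))
    (hsym : ∀ x y : ℝ, deriv (fun t => b t y) x = deriv (fun t => a x t) y) (x y : ℝ) :
    HasDerivAt (fun s => edgePot a b s y) (a x y) x := by
  simp_rw [edgePot_eq_fst hb hsym]
  exact ((contDiff_fst ha y).continuous.integral_hasStrictDerivAt 0 x).hasDerivAt.add_const _

lemma hasDerivAt_edgePot_snd (ha : ContDiff ℝ 1 (fun q : ℝ × ℝ => a q.1 q.2))
    (hb : ContDiff ℝ 1 (fun q : ℝ × ℝ => b q.1 q.2)) (x y : ℝ) :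
    HasDerivAt (fun s => edgePot a b x s) (b x y) y := by
  simp_rw [edgePot_eq_snd ha]
  exact ((contDiff_snd hb x).continuous.integral_hasStrictDerivAt 0 y).hasDerivAt.const_add _

/-- The derivative of the edge potential along a line; joint differentiability comes from the
continuity of both partial derivatives. -/
lemma hasDerivAt_edgePot_line (ha : ContDiff ℝ 1 (fun q : ℝ × ℝ => a q.1 q.2))
    (hb : ContDiff ℝ 1 (fun q : ℝ × ℝ => b q.1 q.2))
    (hsym : ∀ x y : ℝ, deriv (fun t => b t y) x = deriv (fun t => a x t) y) (x y r s : ℝ) :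
    HasDerivAt (fun t : ℝ => edgePot a b (x + t * r) (y + t * s)) (a x y * r + b x y * s) 0 := by
  have hF := hasStrictFDerivAt_uncurry_coprod (𝕜 := ℝ) (u := (x, y)) (f := edgePot a b)
    (f₁ := fun x y => ContinuousLinearMap.toSpanSingleton ℝ (a x y))
    (f₂ := fun x y => ContinuousLinearMap.toSpanSingleton ℝ (b x y))
    (.of_forall fun v => (hasDerivAt_edgePot_fst ha hb hsym v.1 v.2).hasFDerivAt)
    (.of_forall fun v => (hasDerivAt_edgePot_snd ha hb v.1 v.2).hasFDerivAt)
    ((ContinuousLinearMap.toSpanSingletonCLE (𝕜 := ℝ) (E := ℝ)).continuous.comp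
      ha.continuous).continuousAt
    ((ContinuousLinearMap.toSpanSingletonCLE (𝕜 := ℝ) (E := ℝ)).continuous.comp
      hb.continuous).continuousAt
  have hL : HasDerivAt (fun t : ℝ => (x + t * r, y + t * s)) (r, s) 0 := by
    have h1 : HasDerivAt (fun t : ℝ => x + t * r) r 0 := by
      simpa using ((hasDerivAt_id (0 : ℝ)).mul_const r).const_add x
    have h2 : HasDerivAt (fun t : ℝ => y + t * s) s 0 := by
      simpa using ((hasDerivAt_id (0 : ℝ)).mul_const s).const_add y
    exact h1.prodMk h2
  have hF' := hF.hasFDerivAt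
  have e0 : (x, y) = ((fun t : ℝ => (x + t * r, y + t * s)) 0) := by simp
  rw [e0] at hF'
  have := hF'.comp_hasDerivAt (0 : ℝ) hL
  refine this.congr_deriv ?_
  simp [Function.HasUncurry.uncurry, mul_comm]

end Edge

/-! ### The directional derivative of the potential -/

lemma edgeFlow_line [Fintype P] (edges : P → Finset E) (g u : P → ℝ) (t : ℝ) (e : E) :
    edgeFlow edges (g + t • u) e = edgeFlow edges g e + t * edgeFlow edges u e := by
  simp [edgeFlow, Finset.sum_add_distrib, Finset.mul_sum]

/-- Summing edge costs against edge flows is the same as summing path costs against path flows. -/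
lemma sum_edge_mul_edgeFlow [Fintype E] [Fintype P] (edges : P → Finset E) (c : E → ℝ)
    (u : P → ℝ) :
    ∑ e, c e * edgeFlow edges u e = ∑ p, (∑ e ∈ edges p, c e) * u p := by
  simp only [edgeFlow, Finset.mul_sum, Finset.sum_mul, Finset.sum_filter]
  rw [Finset.sum_comm]
  refine Finset.sum_congr rfl fun p _ => ?_
  simp

/-- The directional derivative of `Vpot`: its gradient consists of the path costs. -/
lemma hasDerivAt_Vpot [Fintype E] [Fintype P] (edges : P → Finset E)
    (ℓ1 ℓ2 : E → ℝ → ℝ → ℝ)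
    (hℓ1 : ∀ e, ContDiff ℝ 1 (fun q : ℝ × ℝ => ℓ1 e q.1 q.2))
    (hℓ2 : ∀ e, ContDiff ℝ 1 (fun q : ℝ × ℝ => ℓ2 e q.1 q.2))
    (hsym : ∀ (e : E) (x y : ℝ),
      deriv (fun t => ℓ2 e t y) x = deriv (fun t => ℓ1 e x t) y)
    (g h u v : P → ℝ) :
    HasDerivAt (fun t : ℝ => Vpot edges ℓ1 ℓ2 (g + t • u) (h + t • v))
      ((∑ p, pathCost edges ℓ1 g h p * u p) + ∑ p, pathCost edges ℓ2 g h p * v p) 0 := by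
  have key := HasDerivAt.fun_sum (u := Finset.univ) fun e (_ : e ∈ Finset.univ) =>
    hasDerivAt_edgePot_line (hℓ1 e) (hℓ2 e) (hsym e) (edgeFlow edges g e) (edgeFlow edges h e)
      (edgeFlow edges u e) (edgeFlow edges v e)
  rw [Finset.sum_add_distrib, sum_edge_mul_edgeFlow, sum_edge_mul_edgeFlow] at key
  simp_rw [← edgeFlow_line] at key
  exact key

/-! ### Variational inequalities -/

/-- For fixed path costs `c`, a flow of one type uses only cheapest paths if and only if no other
flow meeting the same demands has a smaller total cost. -/
lemma equilibrium_iff_variational [Fintype P] (com : P → Fin K) (F : Fin K → ℝ)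
    (hPk : ∀ k, ∃ p, com p = k) (c g : P → ℝ) (hg : ∀ p, 0 ≤ g p)
    (hgF : ∀ k, ∑ p ∈ Finset.univ.filter (fun p => com p = k), g p = F k) :
    (∀ p p' : P, com p = com p' → 0 < g p → c p ≤ c p') ↔
      ∀ g' : P → ℝ, (∀ p, 0 ≤ g' p) →
        (∀ k, ∑ p ∈ Finset.univ.filter (fun p => com p = k), g' p = F k) →
        0 ≤ ∑ p, c p * (g' - g) p := by
  constructor
  · intro hN g' hg' hgF'
    have hmin : ∀ k, ∃ q, com q = k ∧ ∀ p, com p = k → c q ≤ c p := by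
      intro k
      obtain ⟨q, hq, hq'⟩ := Finset.exists_min_image
        (Finset.univ.filter (fun p => com p = k)) c (by simpa [Finset.Nonempty] using hPk k)
      exact ⟨q, by simpa using hq, fun p hp => hq' p (by simpa using hp)⟩
    choose q hq hqmin using hmin
    -- Charging every path the minimal cost of its commodity makes all feasible flows equally
    -- expensive.
    have hzero : ∑ p, c (q (com p)) * (g' - g) p = 0 := by
      rw [← Finset.sum_fiberwise Finset.univ com]
      refine Finset.sum_eq_zero fun k _ => ?_
      have : ∀ p ∈ Finset.univ.filter (fun p => com p = k),
          c (q (com p)) * (g' - g) p = c (q k) * (g' p - g p) := by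
        intro p hp
        simp only [Finset.mem_filter, Finset.mem_univ, true_and] at hp
        simp [hp]
      rw [Finset.sum_congr rfl this, ← Finset.mul_sum, Finset.sum_sub_distrib, hgF, hgF', sub_self,
        mul_zero]
    rw [← hzero]
    refine Finset.sum_le_sum fun p _ => ?_
    have h1 := hqmin (com p) p rfl
    rcases (hg p).eq_or_lt with h0 | h0
    · simp only [Pi.sub_apply, ← h0, sub_zero]
      exact mul_le_mul_of_nonneg_right h1 (hg' p)
    · rw [le_antisymm h1 (hN p _ (hq (com p)).symm h0)]
  · intro hV p p' hpp hp
    rcases eq_or_ne p p' with rfl | hne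
    · exact le_rfl
    -- Reroute all the flow on `p` to `p'`.
    have h1 := hV (g + g p • (Pi.single p' 1 - Pi.single p 1)) ?_ ?_
    · have h2 : ∑ r, c r * ((g + g p • (Pi.single p' 1 - Pi.single p 1) : P → ℝ) - g) r
          = g p * (c p' - c p) := by
        simp [mul_sub, Finset.sum_sub_distrib, Pi.single_apply, mul_comm]
      rw [h2] at h1
      nlinarith
    · intro r
      by_cases hr : r = p
      · subst hr
        simp [hne]
      · have := hg r
        by_cases hr' : r = p'
        · subst hr'
          simp [hr]
          positivity
        · simpa [hr, hr'] using this
    · intro k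
      simp only [Pi.add_apply, Pi.smul_apply, Pi.sub_apply, smul_eq_mul, Finset.sum_add_distrib,
        hgF, ← Finset.mul_sum, Finset.sum_sub_distrib]
      simp [Pi.single_apply, hpp]

/-- First-order optimality condition for the convex function `Vpot`. -/
lemma minimizer_iff_variational [Fintype E] [Fintype P] (edges : P → Finset E) (com : P → Fin K)
    (F1 F2 : Fin K → ℝ) (ℓ1 ℓ2 : E → ℝ → ℝ → ℝ)
    (hℓ1 : ∀ e, ContDiff ℝ 1 (fun q : ℝ × ℝ => ℓ1 e q.1 q.2))
    (hℓ2 : ∀ e, ContDiff ℝ 1 (fun q : ℝ × ℝ => ℓ2 e q.1 q.2))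
    (hsym : ∀ (e : E) (x y : ℝ),
      deriv (fun t => ℓ2 e t y) x = deriv (fun t => ℓ1 e x t) y)
    (hconv : ConvexOn ℝ {q : (P → ℝ) × (P → ℝ) | Feasible com F1 F2 q.1 q.2}
      (fun q : (P → ℝ) × (P → ℝ) => Vpot edges ℓ1 ℓ2 q.1 q.2))
    (g h : P → ℝ) (hfeas : Feasible com F1 F2 g h) :
    (∀ g' h' : P → ℝ, Feasible com F1 F2 g' h' →
        Vpot edges ℓ1 ℓ2 g h ≤ Vpot edges ℓ1 ℓ2 g' h') ↔
      ∀ g' h' : P → ℝ, Feasible com F1 F2 g' h' →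
        0 ≤ (∑ p, pathCost edges ℓ1 g h p * (g' - g) p) +
          ∑ p, pathCost edges ℓ2 g h p * (h' - h) p := by
  -- Both directions look at the potential along the segment from `(g, h)` to `(g', h')`.
  have hline : ∀ g' h' : P → ℝ, Feasible com F1 F2 g' h' → ConvexOn ℝ (Set.Icc (0:ℝ) 1)
      (fun t : ℝ => Vpot edges ℓ1 ℓ2 (g + t • (g' - g)) (h + t • (h' - h))) ∧
      ∀ t ∈ Set.Icc (0:ℝ) 1, Feasible com F1 F2 (g + t • (g' - g)) (h + t • (h' - h)) := by
    intro g' h' hf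
    let L : ℝ →ᵃ[ℝ] (P → ℝ) × (P → ℝ) := AffineMap.lineMap (g, h) (g', h')
    have hL : ∀ t, L t = (g + t • (g' - g), h + t • (h' - h)) := by
      intro t
      simp [L, AffineMap.lineMap_apply, add_comm]
    have hmaps : Set.MapsTo L (Set.Icc (0:ℝ) 1)
        {q : (P → ℝ) × (P → ℝ) | Feasible com F1 F2 q.1 q.2} := by
      simpa only [L, Set.mapsTo_iff_image_subset, ← segment_eq_image_lineMap]
        using hconv.1.segment_subset (x := (g, h)) (y := (g', h')) hfeas hf
    refine ⟨?_, fun t ht => ?_⟩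
    · have := (hconv.comp_affineMap L).subset hmaps (convex_Icc 0 1)
      refine this.congr fun t _ => ?_
      simp [hL]
    · have := hmaps ht
      rw [hL] at this
      exact this
  constructor
  · intro hmin g' h' hf
    have hd := (hasDerivAt_Vpot edges ℓ1 ℓ2 hℓ1 hℓ2 hsym g h (g' - g)
      (h' - h)).tendsto_slope_zero_right
    refine ge_of_tendsto hd ?_
    filter_upwards [Ioc_mem_nhdsGT (zero_lt_one (α := ℝ))] with t ht
    have h1 := hmin _ _ ((hline g' h' hf).2 t ⟨ht.1.le, ht.2⟩)
    have h2 := ht.1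
    simp only [zero_add, zero_smul, add_zero, smul_eq_mul]
    exact mul_nonneg (inv_nonneg.2 h2.le) (sub_nonneg.2 h1)
  · intro hV g' h' hf
    have h1 := (hV g' h' hf).trans ((hline g' h' hf).1.le_slope_of_hasDerivAt
      (by simp) (by simp) zero_lt_one
      (hasDerivAt_Vpot edges ℓ1 ℓ2 hℓ1 hℓ2 hsym g h (g' - g) (h' - h)))
    simpa [slope_def_field] using h1

/-- **Corollary 2.** With two types, under Assumption 1, the pointwise symmetry
condition `∂₁ℓ̃_e^{θ₂} = ∂₂ℓ̃_e^{θ₁}` on every edge, and convexity of the potential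
`Vpot` on the (convex) set of feasible flows, a feasible flow is a Nash equilibrium
of the heterogeneous routing game if and only if it minimizes `Vpot` over the set
of feasible flows. -/
theorem isNash_iff_min_vpot {E P : Type*} [Fintype E] [Fintype P] {K : ℕ}
    (edges : P → Finset E) (com : P → Fin K) (F1 F2 : Fin K → ℝ)
    (hF1 : ∀ k, 0 ≤ F1 k) (hF2 : ∀ k, 0 ≤ F2 k)
    (hPk : ∀ k, ∃ p, com p = k)
    (ℓ1 ℓ2 : E → ℝ → ℝ → ℝ)
    (hℓ1 : ∀ e, ContDiff ℝ 1 (fun q : ℝ × ℝ => ℓ1 e q.1 q.2))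
    (hℓ2 : ∀ e, ContDiff ℝ 1 (fun q : ℝ × ℝ => ℓ2 e q.1 q.2))
    (hpos1 : ∀ e x y, 0 ≤ x → 0 ≤ y → 0 ≤ ℓ1 e x y)
    (hpos2 : ∀ e x y, 0 ≤ x → 0 ≤ y → 0 ≤ ℓ2 e x y)
    (hmono1 : ∀ e y, 0 ≤ y → ∀ s t, 0 ≤ s → s ≤ t → ℓ1 e s y ≤ ℓ1 e t y)
    (hmono2 : ∀ e x, 0 ≤ x → ∀ s t, 0 ≤ s → s ≤ t → ℓ2 e x s ≤ ℓ2 e x t)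
    (hsym : ∀ (e : E) (x y : ℝ),
      deriv (fun t => ℓ2 e t y) x = deriv (fun t => ℓ1 e x t) y)
    (hconv : ConvexOn ℝ {q : (P → ℝ) × (P → ℝ) | Feasible com F1 F2 q.1 q.2}
      (fun q : (P → ℝ) × (P → ℝ) => Vpot edges ℓ1 ℓ2 q.1 q.2))
    (g h : P → ℝ) (hfeas : Feasible com F1 F2 g h) :
    IsNash edges com ℓ1 ℓ2 g h ↔
      ∀ g' h' : P → ℝ, Feasible com F1 F2 g' h' →
        Vpot edges ℓ1 ℓ2 g h ≤ Vpot edges ℓ1 ℓ2 g' h' := by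
  rw [minimizer_iff_variational edges com F1 F2 ℓ1 ℓ2 hℓ1 hℓ2 hsym hconv g h hfeas, IsNash,
    equilibrium_iff_variational com F1 hPk _ g hfeas.1 hfeas.2.2.1,
    equilibrium_iff_variational com F2 hPk _ h hfeas.2.1 hfeas.2.2.2]
  constructor
  · rintro ⟨h1, h2⟩ g' h' hf
    exact add_nonneg (h1 g' hf.1 hf.2.2.1) (h2 h' hf.2.1 hf.2.2.2)
  -- Deviations of a single type are feasible because the demands of the two types are separate.
  · intro H
    refine ⟨fun g' hg' hF => ?_, fun h' hh' hF => ?_⟩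
    · simpa using H g' h ⟨hg', hfeas.2.1, hF, hfeas.2.2.2⟩
    · simpa using H g h' ⟨hfeas.1, hh', hfeas.2.2.1, hF⟩

end RoutingGame
end
end

section
/- Let ℓ^{θ_1}, ℓ^{θ_2} : ℝ² → ℝ be twice continuously differentiable, define f(x, y) = ∂_1 ℓ^{θ_2}(y, x) − ∂_2 ℓ^{θ_1}(y, x), and for a constant c ∈ ℝ and a continuously differentiable ψ : ℝ → ℝ define τ(x, y) = c + ∫_0^{y} f(q, x + y − q) dq + ψ(x + y). Then for all (x, y) ∈ ℝ², ∂_2 τ(x, y) − ∂_1 τ(x, y) = f(y, x) = ∂_1 ℓ^{θ_2}(x, y) − ∂_2 ℓ^{θ_1}(x, y). -/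
/-!
Put `s = x + y` and `I s y = ∫ q in 0..y, f q (s - q)`, so that
`τ x y = c + I (x + y) y + ψ (x + y)`. The dependence through `s` contributes equally to both
partial derivatives and cancels in the difference; what survives is the derivative in the upper
limit, which is the integrand at `q = y`, that is `f y (x + y - y) = f y x`.

Differentiability in `s` with fixed limits is differentiation under the integral sign
(`exists_hasDerivAt_integral_param`), available because `f` is `C¹`. In `∂₂τ` the variable occurs
both in the limit and in the integrand, so the integral is split at the base point `y`: the part
over `0..y` has fixed limits, and the part over `y..t` is handled by
`hasDerivAt_integral_diagonal`.
-/

open MeasureTheory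

noncomputable section

/-- Differentiation under the integral sign for a `C¹` integrand over a fixed interval; only the
existence of the derivative matters below, since its value cancels. -/
theorem exists_hasDerivAt_integral_param (g : ℝ × ℝ → ℝ) (hg : ContDiff ℝ 1 g) (a b s : ℝ) :
    ∃ d, HasDerivAt (fun u => ∫ q in a..b, g (q, u)) d s := by
  have hc : Continuous (fun p : ℝ × ℝ => fderiv ℝ g p (0, 1)) :=
    (hg.continuous_fderiv one_ne_zero).clm_apply continuous_const
  -- The compact rectangle supplies a constant dominating function near `s`.
  obtain ⟨C, hC⟩ := ((isCompact_uIcc (a := a) (b := b)).prod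
    (isCompact_Icc (a := s - 1) (b := s + 1))).exists_bound_of_continuousOn hc.continuousOn
  have hgc := hg.continuous
  refine ⟨_, (intervalIntegral.hasDerivAt_integral_of_dominated_loc_of_deriv_le
    (F := fun u q => g (q, u)) (F' := fun u q => fderiv ℝ g (q, u) (0, 1))
    (bound := fun _ => C) (Icc_mem_nhds (by linarith : s - 1 < s) (by linarith : s < s + 1))
    ?_ ?_ ?_ ?_ ?_ ?_).2⟩
  · exact Filter.Eventually.of_forall fun u =>
      (hgc.comp (by fun_prop : Continuous fun q : ℝ => (q, u))).aestronglyMeasurable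
  · exact (hgc.comp (by fun_prop : Continuous fun q : ℝ => (q, s))).intervalIntegrable _ _
  · exact (hc.comp (by fun_prop : Continuous fun q : ℝ => (q, s))).aestronglyMeasurable
  · exact Filter.Eventually.of_forall fun q hq u hu =>
      hC (q, u) ⟨Set.uIoc_subset_uIcc hq, hu⟩
  · exact intervalIntegrable_const
  · refine Filter.Eventually.of_forall fun q _ u _ => ?_
    exact ((hg.differentiable one_ne_zero) (q, u)).hasFDerivAt.comp_hasDerivAt u
      ((hasDerivAt_const u q).prodMk (hasDerivAt_id u))

/-- For a jointly continuous integrand depending on the moving endpoint, the derivative at the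
point where the interval degenerates is just the boundary value of the integrand. -/
theorem hasDerivAt_integral_diagonal (k : ℝ × ℝ → ℝ) (hk : Continuous k) (y : ℝ) :
    HasDerivAt (fun t => ∫ q in y..t, k (q, t)) (k (y, y)) y := by
  -- Rescaling to `0..1` turns the difference quotient into a continuous function of `t`.
  have hK : Continuous (fun t => ∫ r in (0:ℝ)..1, k ((t - y) * r + y, t)) :=
    intervalIntegral.continuous_parametric_intervalIntegral_of_continuous'
      (f := fun t r => k ((t - y) * r + y, t)) (by
        refine hk.comp ?_
        fun_prop) 0 1
  have hEq : ∀ t, ∫ q in y..t, k (q, t) = (t - y) * ∫ r in (0:ℝ)..1, k ((t - y) * r + y, t) := by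
    intro t
    rw [intervalIntegral.mul_integral_comp_mul_add (f := fun q => k (q, t))]
    simp
  rw [hasDerivAt_iff_tendsto_slope]
  have h1 := (hK.tendsto y).mono_left (nhdsWithin_le_nhds (s := {y}ᶜ))
  simp only [sub_self, zero_mul, zero_add, intervalIntegral.integral_const, sub_zero,
    one_smul] at h1
  refine h1.congr' ?_
  filter_upwards [self_mem_nhdsWithin] with t ht
  have ht' : t - y ≠ 0 := sub_ne_zero.mpr ht
  rw [slope_def_field, hEq t, intervalIntegral.integral_same, sub_zero, mul_div_cancel_left₀ _ ht']

/-- **Key identity behind Corollary 3.** For twice continuously differentiable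
`ℓ^{θ₁}, ℓ^{θ₂} : ℝ² → ℝ`, with `f(x,y) = ∂₁ℓ^{θ₂}(y,x) − ∂₂ℓ^{θ₁}(y,x)` and
`τ(x,y) = c + ∫_0^y f(q, x+y−q) dq + ψ(x+y)` (with `ψ ∈ C¹`), we have
`∂₂τ(x,y) − ∂₁τ(x,y) = f(y,x) = ∂₁ℓ^{θ₂}(x,y) − ∂₂ℓ^{θ₁}(x,y)` for all `(x,y)`. -/
theorem toll_deriv_identity (ℓ1 ℓ2 : ℝ → ℝ → ℝ)
    (hℓ1 : ContDiff ℝ 2 (fun q : ℝ × ℝ => ℓ1 q.1 q.2))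
    (hℓ2 : ContDiff ℝ 2 (fun q : ℝ × ℝ => ℓ2 q.1 q.2))
    (f : ℝ → ℝ → ℝ)
    (hf : ∀ x y, f x y = deriv (fun t => ℓ2 t x) y - deriv (fun t => ℓ1 y t) x)
    (c : ℝ) (ψ : ℝ → ℝ) (hψ : ContDiff ℝ 1 ψ)
    (τ : ℝ → ℝ → ℝ)
    (hτ : ∀ x y, τ x y = c + (∫ q in (0:ℝ)..y, f q (x + y - q)) + ψ (x + y)) :
    ∀ x y : ℝ,
      deriv (fun t => τ x t) y - deriv (fun t => τ t y) x = f y x ∧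
      f y x = deriv (fun t => ℓ2 t y) x - deriv (fun t => ℓ1 x t) y := by
  intro x y
  refine ⟨?_, hf y x⟩
  have hfC : ContDiff ℝ 1 (fun p : ℝ × ℝ => f p.1 p.2) := by
    have e : (fun p : ℝ × ℝ => f p.1 p.2) = fun p =>
        fderiv ℝ (fun q : ℝ × ℝ => ℓ2 q.1 q.2) (p.2, p.1) (1, 0)
          - fderiv ℝ (fun q : ℝ × ℝ => ℓ1 q.1 q.2) (p.2, p.1) (0, 1) := by
      funext p
      rw [hf]
      congr 1
      · exact (((hℓ2.differentiable two_ne_zero) (p.2, p.1)).hasFDerivAt.comp_hasDerivAt p.2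
          ((hasDerivAt_id p.2).prodMk (hasDerivAt_const p.2 p.1))).deriv
      · exact (((hℓ1.differentiable two_ne_zero) (p.2, p.1)).hasFDerivAt.comp_hasDerivAt p.1
          ((hasDerivAt_const p.1 p.2).prodMk (hasDerivAt_id p.1))).deriv
    rw [e]
    have hsw : ContDiff ℝ 1 (fun p : ℝ × ℝ => (p.2, p.1)) := contDiff_snd.prodMk contDiff_fst
    exact (((hℓ2.fderiv_right (m := 1) (by norm_num)).comp hsw).clm_apply contDiff_const).sub
      (((hℓ1.fderiv_right (m := 1) (by norm_num)).comp hsw).clm_apply contDiff_const)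
  have hfc := hfC.continuous
  obtain ⟨d, hd⟩ := exists_hasDerivAt_integral_param (fun p => f p.1 (p.2 - p.1))
    (hfC.comp (contDiff_fst.prodMk (contDiff_snd.sub contDiff_fst))) 0 y (x + y)
  have hψd := ((hψ.differentiable one_ne_zero) (x + y)).hasDerivAt
  have hG := (hd.const_add c).add hψd
  have hx : HasDerivAt (fun t => τ t y) (d + deriv ψ (x + y)) x := by
    simp only [hτ]
    exact hG.comp_add_const x y
  have hdiag := hasDerivAt_integral_diagonal (fun p => f p.1 (x + p.2 - p.1))
    (hfc.comp (by fun_prop : Continuous fun p : ℝ × ℝ => (p.1, x + p.2 - p.1))) y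
  have hy : HasDerivAt (fun t => τ x t) (d + deriv ψ (x + y) + f y x) y := by
    have h := (hG.comp_const_add x y).add hdiag
    simp only [add_sub_cancel_right] at h
    refine h.congr_of_eventuallyEq (Filter.Eventually.of_forall fun t => ?_)
    have hi : ∀ a b, IntervalIntegrable (fun q => f q (x + t - q)) volume a b := fun a b =>
      (hfc.comp (by fun_prop : Continuous fun q : ℝ => (q, x + t - q))).intervalIntegrable a b
    have hs := intervalIntegral.integral_add_adjacent_intervals (hi 0 y) (hi y t)
    simp only [hτ, Pi.add_apply, ← hs]
    ring
  rw [hx.deriv, hy.deriv]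
  ring
end
end

section
/- Consider a heterogeneous routing game with affine two-type costs, and suppose that for every edge e, α_{12}^e = α_{21}^e and the symmetric matrix [[α_{11}^e, α_{12}^e], [α_{21}^e, α_{22}^e]] is positive semidefinite. Then the price of anarchy is at most 2: for every Nash equilibrium f̄ and every feasible flow f, C(f̄) ≤ 2 C(f). -/
/-! Write `φ̄`, `φ` for the edge flows of the equilibrium and of the competing flow, and
`ℓ(φ) = A φ + b` edgewise. Since equilibrium flow uses only cheapest paths, it satisfies the
variational inequality `φ̄ᵀ ℓ(φ̄) ≤ φᵀ ℓ(φ̄)` (`sum_mul_le_of_minimal`, transferred from paths to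
edges by `sum_mul_path_eq`). Symmetry and positive semidefiniteness of `A` give
`2 φᵀ A φ̄ ≤ φ̄ᵀ A φ̄ + φᵀ A φ`, so `φ̄ᵀ A φ̄ + 2 bᵀ φ̄ ≤ φᵀ A φ + 2 bᵀ φ`. The left side is at least
`C(f̄)` because `bᵀ φ̄ ≥ 0`, and the right side is at most `2 C(f)` because `φᵀ A φ ≥ 0`. -/

open MeasureTheory

noncomputable section

namespace RoutingGame

open scoped Classical

variable {E P : Type*}

variable {K : ℕ}

/-- Social cost `C(f) = ∑_e [φ₁ ℓ̃_e^{θ₁}(φ₁,φ₂) + φ₂ ℓ̃_e^{θ₂}(φ₁,φ₂)]`. -/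
def socialCost [Fintype E] [Fintype P] (edges : P → Finset E)
    (ℓ1 ℓ2 : E → ℝ → ℝ → ℝ) (g h : P → ℝ) : ℝ :=
  ∑ e : E,
    (edgeFlow edges g e * ℓ1 e (edgeFlow edges g e) (edgeFlow edges h e) +
     edgeFlow edges h e * ℓ2 e (edgeFlow edges g e) (edgeFlow edges h e))

/-- Double counting: the total path cost of `g` under edge prices `w` equals the total edge cost. -/
lemma sum_mul_path_eq [Fintype E] [Fintype P] (edges : P → Finset E) (g : P → ℝ) (w : E → ℝ) :
    ∑ p, g p * ∑ e ∈ edges p, w e = ∑ e, edgeFlow edges g e * w e := by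
  simp only [edgeFlow, Finset.sum_filter, Finset.sum_mul, Finset.mul_sum]
  rw [Finset.sum_comm]
  refine Finset.sum_congr rfl fun p _ => ?_
  simp [ite_mul, Finset.sum_ite_mem]

/-- Variational inequality for one type: a flow `g` supported, in each commodity, on paths of
minimal cost `c` is at most as expensive under `c` as any flow `g'` with the same demands. -/
lemma sum_mul_le_of_minimal [Fintype P] (com : P → Fin K) (F : Fin K → ℝ) (c g g' : P → ℝ)
    (hg : ∀ p, 0 ≤ g p) (hg' : ∀ p, 0 ≤ g' p)
    (hF : ∀ k, ∑ p ∈ Finset.univ.filter (fun p => com p = k), g p = F k)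
    (hF' : ∀ k, ∑ p ∈ Finset.univ.filter (fun p => com p = k), g' p = F k)
    (hmin : ∀ p p' : P, com p = com p' → 0 < g p → c p ≤ c p') :
    ∑ p, g p * c p ≤ ∑ p, g' p * c p := by
  rw [← Finset.sum_fiberwise Finset.univ com (fun p => g p * c p),
    ← Finset.sum_fiberwise Finset.univ com (fun p => g' p * c p)]
  refine Finset.sum_le_sum fun k _ => ?_
  by_cases hk : ∃ q, com q = k ∧ 0 < g q
  · obtain ⟨q, hq, hq0⟩ := hk
    calc ∑ p ∈ Finset.univ.filter (fun p => com p = k), g p * c p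
        ≤ ∑ p ∈ Finset.univ.filter (fun p => com p = k), g p * c q := by
          refine Finset.sum_le_sum fun p hp => ?_
          have hp : com p = k := by simpa using hp
          rcases (hg p).eq_or_lt with h0 | h0
          · simp [← h0]
          · exact mul_le_mul_of_nonneg_left (hmin p q (hp.trans hq.symm) h0) h0.le
      _ = ∑ p ∈ Finset.univ.filter (fun p => com p = k), g' p * c q := by
          rw [← Finset.sum_mul, ← Finset.sum_mul, hF, hF']
      _ ≤ _ := by
          refine Finset.sum_le_sum fun p hp => ?_
          have hp : com p = k := by simpa using hp
          exact mul_le_mul_of_nonneg_left (hmin q p (hq.trans hp.symm) hq0) (hg' p)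
  -- With no used path the demand vanishes, so `g'` vanishes on this commodity as well.
  · push Not at hk
    have hz : ∀ p ∈ Finset.univ.filter (fun p => com p = k), g p = 0 := fun p hp =>
      le_antisymm (hk p (by simpa using hp)) (hg p)
    have hFk : F k = 0 := by rw [← hF k, Finset.sum_eq_zero hz]
    have hz' := (Finset.sum_eq_zero_iff_of_nonneg fun p _ => hg' p).1 ((hF' k).trans hFk)
    refine le_of_eq (Finset.sum_congr rfl fun p hp => ?_)
    rw [hz p hp, hz' p hp]

lemma edgeFlow_nonneg [Fintype P] (edges : P → Finset E) (g : P → ℝ) (hg : ∀ p, 0 ≤ g p)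
    (e : E) : 0 ≤ edgeFlow edges g e :=
  Finset.sum_nonneg fun p _ => hg p

/-- **Theorem 5 (price of anarchy).** For a two-type heterogeneous routing game with
affine edge cost functions with nonnegative coefficients, if `α₁₂ = α₂₁` on every edge
and the matrix `[[α₁₁, α₁₂], [α₂₁, α₂₂]]` is positive semidefinite on every edge, then
the social cost of any Nash equilibrium is at most twice the social cost of any
feasible flow (in particular of a socially optimal flow), i.e. `PoA ≤ 2`. -/
theorem price_of_anarchy_le_two {E P : Type*} [Fintype E] [Fintype P] {K : ℕ}
    (edges : P → Finset E) (com : P → Fin K) (F1 F2 : Fin K → ℝ)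
    (hF1 : ∀ k, 0 ≤ F1 k) (hF2 : ∀ k, 0 ≤ F2 k)
    (a11 a12 a21 a22 b1 b2 : E → ℝ)
    (ha11 : ∀ e, 0 ≤ a11 e) (ha12 : ∀ e, 0 ≤ a12 e)
    (ha21 : ∀ e, 0 ≤ a21 e) (ha22 : ∀ e, 0 ≤ a22 e)
    (hb1 : ∀ e, 0 ≤ b1 e) (hb2 : ∀ e, 0 ≤ b2 e)
    (hsym : ∀ e, a12 e = a21 e)
    (hpsd : ∀ (e : E) (z1 z2 : ℝ),
      0 ≤ a11 e * z1 ^ 2 + a12 e * z1 * z2 + a21 e * z2 * z1 + a22 e * z2 ^ 2)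
    (ℓ1 ℓ2 : E → ℝ → ℝ → ℝ)
    (hℓ1 : ∀ e x y, ℓ1 e x y = a11 e * x + a12 e * y + b1 e)
    (hℓ2 : ∀ e x y, ℓ2 e x y = a21 e * x + a22 e * y + b2 e)
    (gN hN : P → ℝ) (hfeasN : Feasible com F1 F2 gN hN)
    (hNash : IsNash edges com ℓ1 ℓ2 gN hN)
    (g h : P → ℝ) (hfeas : Feasible com F1 F2 g h) :
    socialCost edges ℓ1 ℓ2 gN hN ≤ 2 * socialCost edges ℓ1 ℓ2 g h := by
  obtain ⟨hgN, hhN, hgNF, hhNF⟩ := hfeasN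
  obtain ⟨hg, hh, hgF, hhF⟩ := hfeas
  have v1 := sum_mul_le_of_minimal com F1 (pathCost edges ℓ1 gN hN) gN g hgN hg hgNF hgF hNash.1
  have v2 := sum_mul_le_of_minimal com F2 (pathCost edges ℓ2 gN hN) hN h hhN hh hhNF hhF hNash.2
  simp only [pathCost, sum_mul_path_eq] at v1 v2
  -- Edgewise, `C(f̄) + 2 (φ - φ̄)ᵀ ℓ(φ̄) ≤ 2 C(f)`; the variational inequalities bound the sum of
  -- the middle terms below by `0`.
  have key : socialCost edges ℓ1 ℓ2 gN hN
      + 2 * (∑ e, edgeFlow edges g e * ℓ1 e (edgeFlow edges gN e) (edgeFlow edges hN e)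
        - ∑ e, edgeFlow edges gN e * ℓ1 e (edgeFlow edges gN e) (edgeFlow edges hN e))
      + 2 * (∑ e, edgeFlow edges h e * ℓ2 e (edgeFlow edges gN e) (edgeFlow edges hN e)
        - ∑ e, edgeFlow edges hN e * ℓ2 e (edgeFlow edges gN e) (edgeFlow edges hN e))
      ≤ 2 * socialCost edges ℓ1 ℓ2 g h := by
    simp only [socialCost]
    rw [← Finset.sum_sub_distrib, ← Finset.sum_sub_distrib, Finset.mul_sum, Finset.mul_sum,
      Finset.mul_sum, ← Finset.sum_add_distrib, ← Finset.sum_add_distrib]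
    refine Finset.sum_le_sum fun e _ => ?_
    have n1 := mul_nonneg (hb1 e) (edgeFlow_nonneg edges gN hgN e)
    have n2 := mul_nonneg (hb2 e) (edgeFlow_nonneg edges hN hhN e)
    generalize edgeFlow edges gN e = X at *
    generalize edgeFlow edges hN e = Y at *
    generalize edgeFlow edges g e = x
    generalize edgeFlow edges h e = y
    have p1 := hpsd e (X - x) (Y - y)
    have p2 := hpsd e x y
    simp only [hℓ1, hℓ2, ← hsym e] at p1 p2 ⊢
    linarith
  linarith


end RoutingGame
end
end

section
/- Consider a heterogeneous routing game with affine two-type costs and suppose α_{12}^e = α_{21}^e for every edge e. Then the potential function V(f) = Σ_{e∈E} [ ∫_0^{φ_e^{θ_1}(f)} ℓ̃_e^{θ_1}(u_1, φ_e^{θ_2}(f)) du_1 + ∫_0^{φ_e^{θ_2}(f)} ℓ̃_e^{θ_2}(φ_e^{θ_1}(f), u_2) du_2 − ∫_0^{φ_e^{θ_2}(f)} ∫_0^{φ_e^{θ_1}(f)} ∂_2 ℓ̃_e^{θ_1}(u_1, u_2) du_1 du_2 ] satisfies, for every flow f, V(f) = (1/2) C(f) + (1/2) Σ_{e∈E}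 ( β_1^e φ_e^{θ_1}(f) + β_2^e φ_e^{θ_2}(f) ). -/
/-!
The identity holds edge by edge. Write `x`, `y` for the two edge flows. The two single integrals
equal `α₁₁ x² / 2 + α₁₂ x y + β₁ x` and `α₂₂ y² / 2 + α₂₁ x y + β₂ y`
(`integral_affine`). As `∂₂ℓ₁` is the constant `α₁₂`, the double integral is `α₁₂ x y`; it
removes one of the cross terms, and with `α₁₂ = α₂₁` the remaining one is half of the total cross
term in the social cost. The quadratic terms are also half of those in the social cost, while the
linear terms appear in full, which accounts for the extra `½ (β₁ x + β₂ y)`.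
-/

open MeasureTheory

noncomputable section

namespace RoutingGame

open scoped Classical

variable {E P : Type*}

/-- The antiderivative behind all the edge integrals, for an affine integrand. -/
theorem integral_affine (a c x : ℝ) :
    ∫ u in (0:ℝ)..x, (a * u + c) = a * x ^ 2 / 2 + c * x := by
  rw [intervalIntegral.integral_add (Continuous.intervalIntegrable (by fun_prop) _ _)
    intervalIntegrable_const]
  rw [intervalIntegral.integral_const_mul, integral_id, intervalIntegral.integral_const,
    smul_eq_mul]
  ring

/-- For a two-type heterogeneous routing game with affine edge cost functions with
nonnegative coefficients and `α₁₂ = α₂₁` on every edge, the potential function `Vpot`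
satisfies `V(f) = ½ C(f) + ½ ∑_e (β₁ᵉ φ₁ᵉ + β₂ᵉ φ₂ᵉ)` for every flow `f`. -/
theorem vpot_eq_half_socialCost {E P : Type*} [Fintype E] [Fintype P]
    (edges : P → Finset E)
    (a11 a12 a21 a22 b1 b2 : E → ℝ)
    (ha11 : ∀ e, 0 ≤ a11 e) (ha12 : ∀ e, 0 ≤ a12 e)
    (ha21 : ∀ e, 0 ≤ a21 e) (ha22 : ∀ e, 0 ≤ a22 e)
    (hb1 : ∀ e, 0 ≤ b1 e) (hb2 : ∀ e, 0 ≤ b2 e)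
    (hsym : ∀ e, a12 e = a21 e)
    (ℓ1 ℓ2 : E → ℝ → ℝ → ℝ)
    (hℓ1 : ∀ e x y, ℓ1 e x y = a11 e * x + a12 e * y + b1 e)
    (hℓ2 : ∀ e x y, ℓ2 e x y = a21 e * x + a22 e * y + b2 e) :
    ∀ g h : P → ℝ,
      Vpot edges ℓ1 ℓ2 g h =
        (1 / 2) * socialCost edges ℓ1 ℓ2 g h +
        (1 / 2) * ∑ e : E, (b1 e * edgeFlow edges g e + b2 e * edgeFlow edges h e) := by
  intro g h
  have hd : ∀ e u1 u2, deriv (fun t => ℓ1 e u1 t) u2 = a12 e := by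
    intro e u1 u2
    have : (fun t => ℓ1 e u1 t) = fun t => a12 e * t + (a11 e * u1 + b1 e) := by
      funext t
      rw [hℓ1]
      ring
    rw [this, deriv_add_const, deriv_const_mul_field, deriv_id'', mul_one]
  have h1 : ∀ e x y, ∫ u in (0:ℝ)..x, ℓ1 e u y
      = a11 e * x ^ 2 / 2 + (a12 e * y + b1 e) * x := by
    intro e x y
    simp only [hℓ1, add_assoc]
    exact integral_affine _ _ _
  have h2 : ∀ e x y, ∫ u in (0:ℝ)..y, ℓ2 e x u
      = a22 e * y ^ 2 / 2 + (a21 e * x + b2 e) * y := by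
    intro e x y
    rw [← integral_affine]
    congr 1
    funext u
    rw [hℓ2]
    ring
  unfold Vpot socialCost
  rw [← mul_add, ← Finset.sum_add_distrib, Finset.mul_sum]
  refine Finset.sum_congr rfl fun e _ => ?_
  simp only [h1, h2, hd, intervalIntegral.integral_const, smul_eq_mul, sub_zero]
  -- Symmetry makes the subtracted double integral cancel one of the two cross terms.
  rw [hℓ1, hℓ2, hsym e]
  ring

end RoutingGame
end
end

section
/- Suppose Θ = {θ_1, θ_2} and each edge cost function ℓ̃_e^θ : ℝ² → ℝ is continuously differentiable. Then the function V(f) = Σ_{e∈E} [ ∫_0^{φ_e^{θ_1}(f)} ℓ̃_e^{θ_1}(u_1, φ_e^{θ_2}(f)) du_1 + ∫_0^{φ_e^{θ_2}(f)} ℓ̃_e^{θ_2}(φ_e^{θ_1}(f), u_2) du_2 − ∫_0^{φ_e^{θ_2}(f)} ∫_0^{φ_e^{θ_1}(f)} ∂_2 ℓ̃_e^{θ_1}(u_1, u_2) du_1 du_2 ] is differentiable and, for every path p ∈ P and every flow f ∈ ℝ^{|P|·2}, its partial derivative with respect to the path flow f_p^{θ_2} equals Σ_{e∈p} ℓ̃_e^{θ_2}(φ_e^{θ_1}(f),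 φ_e^{θ_2}(f)); no symmetry condition on the cost functions is required for this identity. -/
/-!
The mixed term of the potential cancels the dependence of the first term on the type-2 flow.
Swapping the order of integration and applying the fundamental theorem of calculus in the second
argument gives, for `C¹` costs,
`∫_0^b ∫_0^a ∂₂ℓ₁(u₁,u₂) du₁ du₂ = ∫_0^a (ℓ₁(u,b) - ℓ₁(u,0)) du`,
so the contribution of an edge with flows `(a, b)` is
`∫_0^a ℓ₁(u,0) du + ∫_0^b ℓ₂(a,u) du` (`Vpot_eq`).
In this form no relation between `ℓ₁` and `ℓ₂` is needed: the derivative in `b` is `ℓ₂(a,b)`, and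
the chain rule along the affine dependence of the edge flows on `f_p^{θ₂}` selects the edges of `p`.

For joint differentiability, `∫_0^b ℓ₂(a,u) du = b ∫_0^1 ℓ₂(a, b s) ds` has a fixed domain
of integration, so one may differentiate under the integral sign
(`differentiable_intervalIntegral_of_contDiff`).
-/

open MeasureTheory

noncomputable section

namespace RoutingGame

open scoped Classical

variable {E P : Type*}

/-- Differentiation under the integral sign: the derivative of the integrand is continuous, hence
bounded on the product of a compact ball of parameters with the interval of integration. -/
lemma differentiable_intervalIntegral_of_contDiff {H : Type*} [NormedAddCommGroup H]
    [NormedSpace ℝ H] [ProperSpace H] {F : H × ℝ → ℝ} (hF : ContDiff ℝ 1 F) (a b : ℝ) :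
    Differentiable ℝ (fun x : H => ∫ s in a..b, F (x, s)) := by
  intro x₀
  have hc : Continuous (fun q : H × ℝ =>
      (fderiv ℝ F q).comp (ContinuousLinearMap.inl ℝ H ℝ)) :=
    (hF.continuous_fderiv one_ne_zero).clm_comp continuous_const
  obtain ⟨C, hC⟩ := ((isCompact_closedBall x₀ 1).prod
    (isCompact_uIcc (a := a) (b := b))).exists_bound_of_continuousOn hc.continuousOn
  have hcont : ∀ x : H, Continuous fun s => F (x, s) := fun x =>
    hF.continuous.comp (by fun_prop)
  refine (intervalIntegral.hasFDerivAt_integral_of_dominated_of_fderiv_le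
    (F' := fun x s => (fderiv ℝ F (x, s)).comp (ContinuousLinearMap.inl ℝ H ℝ))
    (bound := fun _ => C) (Metric.closedBall_mem_nhds x₀ one_pos)
    (Filter.Eventually.of_forall fun x => (hcont x).aestronglyMeasurable)
    ((hcont x₀).intervalIntegrable _ _)
    (Continuous.aestronglyMeasurable (hc.comp (by fun_prop : Continuous fun s : ℝ => (x₀, s))))
    (Filter.Eventually.of_forall fun s hs x hx => hC (x, s) ⟨hx, Set.uIoc_subset_uIcc hs⟩)
    (by simp)
    (Filter.Eventually.of_forall fun s _ x _ => ?_)).differentiableAt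
  exact ((hF.differentiable one_ne_zero) (x, s)).hasFDerivAt.comp x
    (hasFDerivAt_prodMk_left x s)

/-- A primitive of a `C¹` function in its second variable is jointly differentiable in the
parameter and the upper limit. -/
lemma differentiable_primitive {f : ℝ → ℝ → ℝ}
    (hf : ContDiff ℝ 1 (fun q : ℝ × ℝ => f q.1 q.2)) :
    Differentiable ℝ (fun q : ℝ × ℝ => ∫ u in (0:ℝ)..q.2, f q.1 u) := by
  -- Rescaling to the unit interval moves the variable limit into the integrand.
  have h : (fun q : ℝ × ℝ => ∫ u in (0:ℝ)..q.2, f q.1 u) =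
      fun q : ℝ × ℝ => q.2 * ∫ s in (0:ℝ)..1, f q.1 (q.2 * s) := by
    funext q
    simp
  rw [h]
  have hF : ContDiff ℝ 1 (fun r : (ℝ × ℝ) × ℝ => f r.1.1 (r.1.2 * r.2)) :=
    hf.comp (g := fun q : ℝ × ℝ => f q.1 q.2)
      (f := fun r : (ℝ × ℝ) × ℝ => (r.1.1, r.1.2 * r.2)) (by fun_prop)
  exact differentiable_snd.mul (differentiable_intervalIntegral_of_contDiff hF 0 1)

/-- Fubini and the fundamental theorem of calculus evaluate the double integral of `∂₂f`. -/
lemma integral_integral_deriv {f : ℝ → ℝ → ℝ}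
    (hf : ContDiff ℝ 1 (fun q : ℝ × ℝ => f q.1 q.2)) (a b : ℝ) :
    (∫ v in (0:ℝ)..b, ∫ u in (0:ℝ)..a, deriv (fun t => f u t) v) =
      (∫ u in (0:ℝ)..a, f u b) - ∫ u in (0:ℝ)..a, f u 0 := by
  have hd : ∀ u v, HasDerivAt (fun t => f u t)
      (fderiv ℝ (fun q : ℝ × ℝ => f q.1 q.2) (u, v) (0, 1)) v := fun u v =>
    ((hf.differentiable one_ne_zero) (u, v)).hasFDerivAt.comp_hasDerivAt v
      ((hasDerivAt_const v u).prodMk (hasDerivAt_id v))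
  have hc : Continuous fun q : ℝ × ℝ => deriv (fun t => f q.1 t) q.2 := by
    have : (fun q : ℝ × ℝ => deriv (fun t => f q.1 t) q.2) =
        fun q => fderiv ℝ (fun q : ℝ × ℝ => f q.1 q.2) q (0, 1) :=
      funext fun q => (hd q.1 q.2).deriv
    rw [this]
    exact (hf.continuous_fderiv one_ne_zero).clm_apply continuous_const
  have hcv : ∀ v, Continuous fun u => f u v := fun v =>
    hf.continuous.comp (by fun_prop : Continuous fun u : ℝ => (u, v))
  rw [intervalIntegral_intervalIntegral_swap, ← intervalIntegral.integral_sub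
    ((hcv b).intervalIntegrable _ _) ((hcv 0).intervalIntegrable _ _)]
  · refine intervalIntegral.integral_congr fun u _ => ?_
    exact intervalIntegral.integral_deriv_eq_sub (fun v _ => (hd u v).differentiableAt)
      ((hc.comp (by fun_prop : Continuous fun v : ℝ => (u, v))).intervalIntegrable _ _)
  · have hs : Continuous (Function.uncurry fun v u => deriv (fun t => f u t) v) :=
      hc.comp continuous_swap
    exact (hs.continuousOn.integrableOn_compact
      (isCompact_uIcc.prod isCompact_uIcc)).mono_set
      (Set.prod_mono Set.uIoc_subset_uIcc Set.uIoc_subset_uIcc)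

/-- The separated form of the potential: the type-2 flow only enters through the `ℓ₂` term. -/
lemma Vpot_eq [Fintype E] [Fintype P] (edges : P → Finset E) (ℓ1 ℓ2 : E → ℝ → ℝ → ℝ)
    (hℓ1 : ∀ e, ContDiff ℝ 1 (fun q : ℝ × ℝ => ℓ1 e q.1 q.2)) (g h : P → ℝ) :
    Vpot edges ℓ1 ℓ2 g h = ∑ e : E,
      ((∫ u in (0:ℝ)..(edgeFlow edges g e), ℓ1 e u 0) +
        ∫ u in (0:ℝ)..(edgeFlow edges h e), ℓ2 e (edgeFlow edges g e) u) := by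
  refine Finset.sum_congr rfl fun e _ => ?_
  rw [integral_integral_deriv (hℓ1 e)]
  ring

lemma differentiable_edgeFlow [Fintype P] (edges : P → Finset E) (e : E) :
    Differentiable ℝ (fun g : P → ℝ => edgeFlow edges g e) := by
  unfold edgeFlow
  fun_prop

lemma hasDerivAt_edgeFlow_update [Fintype P] [DecidableEq P] (edges : P → Finset E)
    (h : P → ℝ) (p : P) (e : E) (t : ℝ) :
    HasDerivAt (fun t => edgeFlow edges (Function.update h p t) e)
      (if e ∈ edges p then 1 else 0) t := by
  have := HasDerivAt.fun_sum (u := Finset.univ.filter fun p => e ∈ edges p)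
    fun q _ => hasDerivAt_pi.1 (hasDerivAt_update h p t) q
  simpa [edgeFlow, Pi.single_apply] using this

/-- With two types and continuously differentiable edge cost functions, the candidate
potential `Vpot` is differentiable and its partial derivative with respect to the path
flow `f_p^{θ₂}` equals `∑_{e∈p} ℓ̃_e^{θ₂}(φ₁,φ₂)`; no symmetry condition is needed. -/
theorem deriv_vpot_type2 {E P : Type*} [Fintype E] [Fintype P] [DecidableEq P]
    (edges : P → Finset E) (ℓ1 ℓ2 : E → ℝ → ℝ → ℝ)
    (hℓ1 : ∀ e, ContDiff ℝ 1 (fun q : ℝ × ℝ => ℓ1 e q.1 q.2))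
    (hℓ2 : ∀ e, ContDiff ℝ 1 (fun q : ℝ × ℝ => ℓ2 e q.1 q.2)) :
    Differentiable ℝ (fun q : (P → ℝ) × (P → ℝ) => Vpot edges ℓ1 ℓ2 q.1 q.2) ∧
    ∀ (p : P) (g h : P → ℝ),
      deriv (fun t => Vpot edges ℓ1 ℓ2 g (Function.update h p t)) (h p) =
        ∑ e ∈ edges p, ℓ2 e (edgeFlow edges g e) (edgeFlow edges h e) := by
  constructor
  · simp only [Vpot_eq edges ℓ1 ℓ2 hℓ1]
    have hg : ∀ e, Differentiable ℝ
        (fun q : (P → ℝ) × (P → ℝ) => edgeFlow edges q.1 e) := fun e =>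
      (differentiable_edgeFlow edges e).comp differentiable_fst
    have hh : ∀ e, Differentiable ℝ
        (fun q : (P → ℝ) × (P → ℝ) => edgeFlow edges q.2 e) := fun e =>
      (differentiable_edgeFlow edges e).comp differentiable_snd
    refine Differentiable.fun_sum fun e _ => Differentiable.add ?_ ?_
    · have hc : Continuous fun u => ℓ1 e u 0 :=
        (hℓ1 e).continuous.comp (by fun_prop : Continuous fun u : ℝ => (u, (0:ℝ)))
      have hF : Differentiable ℝ fun a : ℝ => ∫ u in (0:ℝ)..a, ℓ1 e u 0 := fun a =>
        (hc.integral_hasStrictDerivAt 0 a).hasDerivAt.differentiableAt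
      exact hF.comp (hg e)
    · exact (differentiable_primitive (hℓ2 e)).comp ((hg e).prodMk (hh e))
  · intro p g h
    simp only [Vpot_eq edges ℓ1 ℓ2 hℓ1]
    have hd : ∀ e ∈ (Finset.univ : Finset E), HasDerivAt (fun t =>
        (∫ u in (0:ℝ)..(edgeFlow edges g e), ℓ1 e u 0) +
          ∫ u in (0:ℝ)..(edgeFlow edges (Function.update h p t) e),
            ℓ2 e (edgeFlow edges g e) u)
        (ℓ2 e (edgeFlow edges g e) (edgeFlow edges h e) * if e ∈ edges p then 1 else 0)
        (h p) := by
      intro e _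
      have hc : Continuous fun u => ℓ2 e (edgeFlow edges g e) u :=
        (hℓ2 e).continuous.comp
          (by fun_prop : Continuous fun u : ℝ => (edgeFlow edges g e, u))
      have hF := (hc.integral_hasStrictDerivAt 0 (edgeFlow edges h e)).hasDerivAt
      refine HasDerivAt.const_add _ (HasDerivAt.comp_of_eq (h p) hF
        (hasDerivAt_edgeFlow_update edges h p e (h p)) ?_)
      rw [Function.update_eq_self]
    rw [(HasDerivAt.fun_sum hd).deriv]
    simp

end RoutingGame
end
end
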